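/- arXiv:2209.00986 — 2 statements merged into one kernel-verified Lean document; each statement's English description precedes it below -/
import Mathlib

section
/- Let G be a finite group with tp(G) > (1/2)^8. Then G is supersoluble or G has a section isomorphic to the alternating group A_4, i.e. there exist subgroups N ⊴ H ≤ G with H/N ≅ A_4. -/
/-!
Common transversals pass to quotients, and comparing their numbers gives `tp G ≤ tp (G ⧸ C)` for
every normal subgroup `C`. By induction on `|G|` it therefore suffices to find a nontrivial cyclic
normal subgroup of `G`, or a section `A₄`.

Let `H` have prime order `p`, and consider the orbits of `H` on the left cosets of `H`. The fixed
points make up `N_G(H) / H`; every other orbit is free, and on such an orbit a common transversal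
amounts to a permutation of `H`, because its `p` elements lie in a single double coset of `H` and
represent `p` distinct right cosets. If there are `k` free orbits, then `|G| = |N_G(H)| + k p²` and
`tp G ≤ (p! / p ^ p) ^ k`. When no nontrivial cyclic subgroup is normal, `k` is positive, and
`tp G > 2⁻⁸` leaves only `p = 2`, `k ≤ 7`; `p = 3`, `k ≤ 3`; and `p = 5, 7`, `k = 1`. As `|N_G(H)|`
divides `k p²`, few orders divisible by an odd prime remain, and most of these force a nontrivial
cyclic normal subgroup: by a squarefree order, a `p`-subgroup of index at most two, or an element
whose centralizer has index at most two. In the surviving orders 12 and 24, the group acts on the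
cosets of a subgroup of index four and embeds in `S₄` with image containing `A₄`.
-/

open scoped Pointwise Classical

/-- `T` is simultaneously a left transversal for `H` (each left coset `gH` contains exactly one
element of `T`) and a right transversal for `K` (each right coset `Kg` contains exactly one
element of `T`). -/
def IsDoubleTransversal {G : Type*} [Group G] (H K : Subgroup G) (T : Set G) : Prop :=
  (∀ g : G, ∃! t : G, t ∈ T ∧ g⁻¹ * t ∈ H) ∧ (∀ g : G, ∃! t : G, t ∈ T ∧ t * g⁻¹ ∈ K)

/-- `|DT_G(H,K)|`: the number of common transversals for the pair `(H, K)`. -/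
noncomputable def numDT {G : Type*} [Group G] (H K : Subgroup G) : ℕ :=
  Nat.card {T : Set G // IsDoubleTransversal H K T}

/-- `P_G(H,K) = |DT_G(H,K)| / |H| ^ (G:H)`, the common transversal probability. -/
noncomputable def transProb {G : Type*} [Group G] (H K : Subgroup G) : ℚ :=
  (numDT H K : ℚ) / (Nat.card H : ℚ) ^ H.index

/-- `tp(G)`: the minimum of `P_G(H) = P_G(H,H)` over all subgroups `H ≤ G`. -/
noncomputable def tp (G : Type*) [Group G] [Finite G] : ℚ :=
  haveI : Finite (Subgroup G) :=
    Finite.of_injective (fun H : Subgroup G => (H : Set G)) SetLike.coe_injective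
  haveI : Fintype (Subgroup G) := Fintype.ofFinite _
  Finset.univ.inf' Finset.univ_nonempty (fun H : Subgroup G => transProb H H)

/-- `G` has a section isomorphic to `X`: there are subgroups `N ⊴ H ≤ G` with `H/N ≅ X`,
equivalently (as formalized here) some subgroup of `G` admits a surjective homomorphism
onto `X`. -/
def HasSectionIsomorphicTo (G : Type*) [Group G] (X : Type*) [Group X] : Prop :=
  ∃ (H : Subgroup G) (φ : H →* X), Function.Surjective φ

/-- `G` is supersoluble: there is a chain `⊥ = c 0 ≤ c 1 ≤ ⋯ ≤ c n = ⊤` of subgroups, all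
normal in `G`, such that each successive quotient `c (i+1) / c i` is cyclic (expressed here
as: `c (i+1)` is contained in the join of `c i` with a single generator). -/
def IsSupersoluble (G : Type*) [Group G] : Prop :=
  ∃ (n : ℕ) (c : Fin (n + 1) → Subgroup G),
    c 0 = ⊥ ∧ c (Fin.last n) = ⊤ ∧ Monotone c ∧ (∀ i, (c i).Normal) ∧
      ∀ i : Fin n, ∃ x : G, c i.succ ≤ Subgroup.closure {x} ⊔ c i.castSucc

section Counting

open Function
open scoped Nat

variable {G : Type*} [Group G]

namespace IsDoubleTransversal

variable {H K : Subgroup G} {T T' : Set G}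

lemma isComplement (hT : IsDoubleTransversal H K T) : Subgroup.IsComplement T (H : Set G) := by
  refine Subgroup.isComplement_iff_existsUnique_inv_mul_mem.2 fun g => ?_
  obtain ⟨t, ⟨ht, hgt⟩, huniq⟩ := hT.1 g
  refine ⟨⟨t, ht⟩, by simpa using H.inv_mem hgt, fun s hs => Subtype.ext (huniq s ⟨s.2, ?_⟩)⟩
  simpa using H.inv_mem hs

lemma eq_of_mul_inv_mem (hT : IsDoubleTransversal H K T) {s t g : G} (hs : s ∈ T) (ht : t ∈ T)
    (hsg : s * g⁻¹ ∈ K) (htg : t * g⁻¹ ∈ K) : s = t :=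
  (hT.2 g).unique ⟨hs, hsg⟩ ⟨ht, htg⟩

/-- The unique element of a common transversal lying in a given left coset. -/
noncomputable def leftRep (hT : IsDoubleTransversal H K T) (c : G ⧸ H) : G :=
  hT.isComplement.leftQuotientEquiv c

lemma leftRep_mem (hT : IsDoubleTransversal H K T) (c : G ⧸ H) : hT.leftRep c ∈ T :=
  (hT.isComplement.leftQuotientEquiv c).2

lemma mk_leftRep (hT : IsDoubleTransversal H K T) (c : G ⧸ H) : (hT.leftRep c : G ⧸ H) = c :=
  hT.isComplement.quotientGroupMk_leftQuotientEquiv c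

lemma leftRep_mk (hT : IsDoubleTransversal H K T) {t : G} (ht : t ∈ T) : hT.leftRep t = t :=
  congrArg Subtype.val (hT.isComplement.leftQuotientEquiv.apply_symm_apply ⟨t, ht⟩)

lemma range_leftRep (hT : IsDoubleTransversal H K T) : Set.range hT.leftRep = T :=
  Set.Subset.antisymm (Set.range_subset_iff.2 hT.leftRep_mem) fun _ ht => ⟨_, hT.leftRep_mk ht⟩

lemma exists_perm_leftRep_smul [Finite H] (hT : IsDoubleTransversal H H T) (c : G ⧸ H) :
    ∃ σ : Equiv.Perm H, ∀ a : H, hT.leftRep (a • c) = a * c.out * σ a := by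
  have hmem (a : H) : (a * c.out)⁻¹ * hT.leftRep (a • c) ∈ H := by
    rw [← QuotientGroup.eq, hT.mk_leftRep, ← smul_eq_mul, ← MulAction.Quotient.smul_coe,
      QuotientGroup.out_eq']
    rfl
  let f (a : H) : H := ⟨_, hmem a⟩
  have hf (a : H) : hT.leftRep (a • c) = a * c.out * f a := (mul_inv_cancel_left _ _).symm
  have hinj : Injective f := by
    intro a a' haa'
    have hrep : hT.leftRep (a • c) = hT.leftRep (a' • c) := by
      refine hT.eq_of_mul_inv_mem (g := c.out * f a) (hT.leftRep_mem _) (hT.leftRep_mem _) ?_ ?_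
      · simp [hf, mul_assoc]
      · simp [hf, haa', mul_assoc]
    rw [hf, hf, haa'] at hrep
    exact Subtype.ext (mul_right_cancel (mul_right_cancel hrep))
  exact ⟨Equiv.ofBijective f (Finite.injective_iff_bijective.1 hinj), hf⟩

end IsDoubleTransversal

lemma numDT_le [Finite G] {H : Subgroup G} {ι : Type*} [Finite ι] (c : ι → G ⧸ H) :
    numDT H H ≤ (Nat.card H)! ^ Nat.card ι *
      Nat.card H ^ Nat.card ↥(Set.range fun p : ι × H => p.2 • c p.1)ᶜ := by
  set R := Set.range fun p : ι × H => p.2 • c p.1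
  have hmem (T : {T : Set G // IsDoubleTransversal H H T}) (d : G ⧸ H) :
      d.out⁻¹ * T.2.leftRep d ∈ H := by
    rw [← QuotientGroup.eq, QuotientGroup.out_eq', T.2.mk_leftRep]
  choose σ hσ using fun T : {T : Set G // IsDoubleTransversal H H T} => T.2.exists_perm_leftRep_smul
  let code (T : {T : Set G // IsDoubleTransversal H H T}) :
      (ι → Equiv.Perm H) × (↥Rᶜ → H) :=
    (fun i => σ T (c i), fun d => ⟨_, hmem T d⟩)
  have hcode : Injective code := by
    intro T T' hTT'
    have hrep (d : G ⧸ H) : T.2.leftRep d = T'.2.leftRep d := by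
      by_cases hd : d ∈ R
      · obtain ⟨⟨i, a⟩, rfl⟩ := hd
        have : σ T (c i) = σ T' (c i) := congrFun (congrArg Prod.fst hTT') i
        rw [hσ, hσ, this]
      · exact mul_left_cancel
          (congrArg Subtype.val (congrFun (congrArg Prod.snd hTT') ⟨d, hd⟩))
    rw [Subtype.ext_iff, ← T.2.range_leftRep, ← T'.2.range_leftRep, funext hrep]
  simpa only [numDT, Nat.card_prod, Nat.card_fun, Nat.card_perm] using
    Nat.card_le_card_of_injective code hcode

lemma transProb_le_pow [Finite G] {H : Subgroup G} {ι : Type*} [Finite ι] {c : ι → G ⧸ H}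
    (hc : Injective fun p : ι × H => p.2 • c p.1) :
    transProb H H ≤ (((Nat.card H)! : ℚ) / (Nat.card H : ℚ) ^ Nat.card H) ^ Nat.card ι := by
  have hnum := numDT_le c
  set R := Set.range fun p : ι × H => p.2 • c p.1
  have hindex : H.index = Nat.card H * Nat.card ι + Nat.card ↥Rᶜ := by
    rw [mul_comm, ← Nat.card_prod, ← Nat.card_range_of_injective hc, Nat.card_coe_set_eq,
      Nat.card_coe_set_eq, Set.ncard_add_ncard_compl, Subgroup.index]
  have hH : (0 : ℚ) < Nat.card H := mod_cast Nat.card_pos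
  rw [transProb, div_le_iff₀ (by positivity), hindex, pow_add, pow_mul, ← mul_assoc, ← mul_pow,
    div_mul_cancel₀ _ (by positivity)]
  exact_mod_cast hnum

lemma tp_le_transProb [Finite G] (H : Subgroup G) : tp G ≤ transProb H H :=
  Finset.inf'_le (fun H : Subgroup G => transProb H H) (by simp)

end Counting

section Surjective

open Function

variable {G G' : Type*} [Group G] [Group G'] {f : G →* G'}

lemma IsDoubleTransversal.image {K L : Subgroup G'} {T : Set G}
    (hT : IsDoubleTransversal (K.comap f) (L.comap f) T) (hf : Surjective f) :
    IsDoubleTransversal K L (f '' T) := by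
  constructor <;> intro g <;> obtain ⟨g, rfl⟩ := hf g
  · obtain ⟨t, ⟨ht, hgt⟩, huniq⟩ := hT.1 g
    refine ⟨f t, ⟨⟨t, ht, rfl⟩, by simpa using hgt⟩, ?_⟩
    rintro _ ⟨⟨s, hs, rfl⟩, hgs⟩
    rw [huniq s ⟨hs, by simpa using hgs⟩]
  · obtain ⟨t, ⟨ht, htg⟩, huniq⟩ := hT.2 g
    refine ⟨f t, ⟨⟨t, ht, rfl⟩, by simpa using htg⟩, ?_⟩
    rintro _ ⟨⟨s, hs, rfl⟩, hsg⟩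
    rw [huniq s ⟨hs, by simpa using hsg⟩]

lemma IsDoubleTransversal.map_leftRep {K L : Subgroup G'} {T : Set G}
    (hT : IsDoubleTransversal (K.comap f) (L.comap f) T) (hf : Surjective f) (g : G) :
    f (hT.leftRep g) = (hT.image hf).leftRep (f g) := by
  have hmk : ((f (hT.leftRep g) : G') : G' ⧸ K) = f g := by
    rw [QuotientGroup.eq, ← map_inv, ← map_mul, ← Subgroup.mem_comap, ← QuotientGroup.eq,
      hT.mk_leftRep]
  rw [← hmk, (hT.image hf).leftRep_mk ⟨_, hT.leftRep_mem _, rfl⟩]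

lemma numDT_comap_le [Finite G] (hf : Surjective f) (K L : Subgroup G') :
    numDT (K.comap f) (L.comap f) ≤ numDT K L * Nat.card f.ker ^ K.index := by
  have : Finite G' := Finite.of_surjective f hf
  set 𝒯 := {T : Set G // IsDoubleTransversal (K.comap f) (L.comap f) T}
  have hmem (T : 𝒯) (c : G ⧸ K.comap f) :
      (surjInv hf (f (T.2.leftRep c)))⁻¹ * T.2.leftRep c ∈ f.ker := by
    rw [MonoidHom.mem_ker, map_mul, map_inv, surjInv_eq hf, inv_mul_cancel]
  let code (T : 𝒯) : {T : Set G' // IsDoubleTransversal K L T} × (G ⧸ K.comap f → f.ker) :=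
    (⟨f '' T.1, T.2.image hf⟩, fun c => ⟨_, hmem T c⟩)
  have hcode : Injective code := by
    intro T T' hTT'
    have himage : f '' T.1 = f '' T'.1 := congrArg (fun p => p.1.1) hTT'
    have hrep (c : G ⧸ K.comap f) : T.2.leftRep c = T'.2.leftRep c := by
      have hmap : f (T.2.leftRep c) = f (T'.2.leftRep c) := by
        obtain ⟨g, rfl⟩ := QuotientGroup.mk_surjective c
        simp only [IsDoubleTransversal.map_leftRep _ hf, himage]
      have hker : (surjInv hf (f (T.2.leftRep c)))⁻¹ * T.2.leftRep c =
          (surjInv hf (f (T'.2.leftRep c)))⁻¹ * T'.2.leftRep c :=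
        congrArg Subtype.val (congrFun (congrArg Prod.snd hTT') c)
      rw [hmap] at hker
      exact mul_left_cancel hker
    rw [Subtype.ext_iff, ← T.2.range_leftRep, ← T'.2.range_leftRep, funext hrep]
  have hcard := Nat.card_le_card_of_injective code hcode
  rwa [Nat.card_prod, Nat.card_fun, ← Subgroup.index, K.index_comap_of_surjective hf] at hcard

lemma transProb_comap_le [Finite G] (hf : Surjective f) (K L : Subgroup G') :
    transProb (K.comap f) (L.comap f) ≤ transProb K L := by
  have : Finite G' := Finite.of_surjective f hf
  have hindex := K.index_comap_of_surjective hf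
  have hcard : Nat.card (K.comap f) = Nat.card f.ker * Nat.card K := by
    refine Nat.eq_of_mul_eq_mul_right (Nat.pos_of_ne_zero K.index_ne_zero_of_finite) ?_
    rw [mul_assoc, K.card_mul_index, ← hindex, Subgroup.card_mul_index, ← f.ker.card_mul_index,
      Subgroup.index_ker, f.range_eq_top.2 hf, Subgroup.card_top]
  have hK : (0 : ℚ) < Nat.card K := mod_cast Nat.card_pos
  have hker : (0 : ℚ) < Nat.card f.ker := mod_cast Nat.card_pos
  rw [transProb, transProb, hindex, hcard, Nat.cast_mul, mul_pow,
    div_le_div_iff₀ (by positivity) (by positivity), ← mul_assoc]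
  gcongr
  exact_mod_cast numDT_comap_le hf K L

lemma tp_le_of_surjective [Finite G] [Finite G'] (hf : Surjective f) : tp G ≤ tp G' :=
  Finset.le_inf' _ _ fun K _ => (tp_le_transProb _).trans (transProb_comap_le hf K K)

lemma HasSectionIsomorphicTo.of_surjective {X : Type*} [Group X] (hf : Surjective f)
    (h : HasSectionIsomorphicTo G' X) : HasSectionIsomorphicTo G X := by
  obtain ⟨K, φ, hφ⟩ := h
  exact ⟨K.comap f, φ.comp (f.subgroupComap K),
    hφ.comp (f.subgroupComap_surjective_of_surjective K hf)⟩

end Surjective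

section PrimeOrder

open Function MulAction
open scoped Nat

variable {H X : Type*} [Group H] [MulAction H X]

lemma stabilizer_eq_bot_of_prime_card (hH : (Nat.card H).Prime) {x : X}
    (hx : x ∉ fixedPoints H X) : stabilizer H x = ⊥ := by
  have : Fact (Nat.card H).Prime := ⟨hH⟩
  refine (stabilizer H x).eq_bot_or_eq_top_of_prime_card.resolve_right fun htop => hx fun a => ?_
  exact mem_stabilizer_iff.1 (htop ▸ Subgroup.mem_top a)

lemma exists_injective_smul_of_prime_card (hH : (Nat.card H).Prime) :
    ∃ S : Set X, Injective (fun p : S × H => p.2 • (p.1 : X)) ∧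
      Set.range (fun p : S × H => p.2 • (p.1 : X)) = (fixedPoints H X)ᶜ := by
  let rep (x : X) : X := (Quotient.mk'' x : orbitRel.Quotient H X).out
  have rep_mem (x : X) : rep x ∈ orbit H x :=
    orbitRel_apply.1 (Quotient.exact' (Quotient.out_eq' _))
  have rep_smul (a : H) (x : X) : rep (a • x) = rep x :=
    congrArg Quotient.out (Quotient.sound' (mem_orbit x a))
  have smul_mem {a : H} {x : X} : a • x ∈ fixedPoints H X ↔ x ∈ fixedPoints H X := by
    refine ⟨fun h => ?_, fun h => by rwa [h a]⟩
    have hax : x = a • x := (inv_smul_smul a x).symm.trans (h a⁻¹)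
    rwa [hax]
  refine ⟨{x | x ∉ fixedPoints H X ∧ rep x = x}, ?_, Set.Subset.antisymm ?_ fun x hx => ?_⟩
  · rintro ⟨⟨x, hx, hxrep⟩, a⟩ ⟨⟨y, -, hyrep⟩, b⟩ (hxy : a • x = b • y)
    obtain rfl : x = y := by rw [← hxrep, ← hyrep, ← rep_smul a, hxy, rep_smul]
    have hab : b⁻¹ * a ∈ stabilizer H x := by
      rw [mem_stabilizer_iff, mul_smul, hxy, inv_smul_smul]
    rw [stabilizer_eq_bot_of_prime_card hH hx, Subgroup.mem_bot, inv_mul_eq_one] at hab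
    rw [hab]
  · rintro _ ⟨⟨⟨x, hx, -⟩, a⟩, rfl⟩
    exact fun hax => hx (smul_mem.1 hax)
  · obtain ⟨a, ha : a • x = rep x⟩ := rep_mem x
    refine ⟨⟨⟨rep x, ?_, ?_⟩, a⁻¹⟩, ?_⟩
    · rwa [← ha, smul_mem]
    · rw [← ha, rep_smul, ha]
    · exact inv_smul_eq_iff.2 ha.symm

variable {G : Type*} [Group G] [Finite G]

lemma exists_card_eq_and_transProb_le {H : Subgroup G} (hH : (Nat.card H).Prime) :
    ∃ k, Nat.card G = Nat.card (Subgroup.normalizer (H : Set G)) + k * Nat.card H ^ 2 ∧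
      transProb H H ≤ (((Nat.card H)! : ℚ) / (Nat.card H : ℚ) ^ Nat.card H) ^ k := by
  obtain ⟨S, hinj, hrange⟩ := exists_injective_smul_of_prime_card (X := G ⧸ H) hH
  refine ⟨Nat.card S, ?_, transProb_le_pow hinj⟩
  have hindex : H.index = Nat.card (fixedPoints H (G ⧸ H)) + Nat.card S * Nat.card H := by
    rw [← Nat.card_prod, ← Nat.card_range_of_injective hinj, hrange, Nat.card_coe_set_eq,
      Nat.card_coe_set_eq, Set.ncard_add_ncard_compl, Subgroup.index]
  have hnormalizer : Nat.card H * Nat.card (fixedPoints H (G ⧸ H)) =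
      Nat.card (Subgroup.normalizer (H : Set G)) := by
    rw [Nat.card_congr (Sylow.fixedPointsMulLeftCosetsEquivQuotient H),
      ← Nat.card_congr (Subgroup.subgroupOfEquivOfLe H.le_normalizer).toEquiv]
    exact Subgroup.card_mul_index _
  rw [← H.card_mul_index, hindex, mul_add, hnormalizer]
  ring

end PrimeOrder

section Supersoluble

open Function

variable {G G' : Type*} [Group G] [Group G'] {f : G →* G'}

lemma comap_closure_singleton_sup (hf : Surjective f) (x : G) (K : Subgroup G') :
    (Subgroup.closure {f x} ⊔ K).comap f = Subgroup.closure {x} ⊔ K.comap f := by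
  rw [← Set.image_singleton, ← MonoidHom.map_closure, ← Subgroup.comap_sup_eq _ _ _ hf,
    Subgroup.comap_map_eq, sup_assoc, sup_eq_right.2 (f.ker_le_comap K)]

lemma IsSupersoluble.of_subsingleton [Subsingleton G] : IsSupersoluble G :=
  ⟨0, fun _ => ⊥, rfl, Subsingleton.elim _ _, monotone_const, fun _ => inferInstance, finZeroElim⟩

lemma IsSupersoluble.of_surjective [IsCyclic f.ker] (hf : Surjective f)
    (h : IsSupersoluble G') : IsSupersoluble G := by
  obtain ⟨n, c, hbot, htop, hmono, hnormal, hcyclic⟩ := h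
  refine ⟨n + 1, Fin.cons ⊥ fun i => (c i).comap f, rfl, ?_, ?_, ?_, ?_⟩
  · rw [← Fin.succ_last, Fin.cons_succ, htop, Subgroup.comap_top]
  · exact Fin.monotone_iff_le_succ.2 (Fin.cases bot_le fun i =>
      Subgroup.comap_mono (hmono (Fin.castSucc_le_succ i)))
  · refine Fin.cases ?_ fun i => ?_
    · exact Subgroup.normal_bot
    · exact (hnormal i).comap f
  · refine Fin.cases ?_ fun i => ?_
    · obtain ⟨x, hx⟩ := (Subgroup.isCyclic_iff_exists_zpowers_eq_top f.ker).1 inferInstance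
      refine ⟨x, ?_⟩
      rw [Fin.cons_succ, hbot, MonoidHom.comap_bot, ← hx, Subgroup.zpowers_eq_closure]
      exact le_sup_left
    · obtain ⟨y, hy⟩ := hcyclic i
      obtain ⟨x, rfl⟩ := hf y
      refine ⟨x, ?_⟩
      rw [← Fin.succ_castSucc, Fin.cons_succ, Fin.cons_succ, ← comap_closure_singleton_sup hf]
      exact Subgroup.comap_mono hy

end Supersoluble

section NormalCyclic

open Subgroup

variable {G : Type*} [Group G]

/-- `G` has a nontrivial cyclic normal subgroup: the quotient by it is the step of the induction
on the order of `G`. -/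
def HasNormalCyclic (G : Type*) [Group G] : Prop :=
  ∃ C : Subgroup G, C ≠ ⊥ ∧ C.Normal ∧ IsCyclic C

namespace HasNormalCyclic

lemma of_normal_zpowers {x : G} (hx : x ≠ 1) (h : (zpowers x).Normal) : HasNormalCyclic G :=
  ⟨zpowers x, zpowers_ne_bot.2 hx, h, inferInstance⟩

lemma of_semiconjBy_mem_zpowers {x : G} (hx : x ≠ 1)
    (h : ∀ g : G, ∃ y ∈ zpowers x, SemiconjBy g x y) : HasNormalCyclic G := by
  refine of_normal_zpowers hx ⟨fun z hz g => ?_⟩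
  obtain ⟨n, rfl⟩ := mem_zpowers_iff.1 hz
  obtain ⟨y, hy, hgxy⟩ := h g
  rw [(hgxy.zpow_right n).eq, mul_inv_cancel_right]
  exact zpow_mem hy n

-- If `C(x)` has index 2, then `x` has at most one other conjugate `y`, and `x` and `y` commute:
-- either `y * x` is a nontrivial central element, or `y = x⁻¹`.
lemma of_index_centralizer_dvd_two {x : G} (hx : x ≠ 1)
    (h : (centralizer {x}).index ∣ 2) : HasNormalCyclic G := by
  obtain ⟨a, ha⟩ := index_dvd_two_iff.1 h
  have hnormal : (centralizer {x}).Normal := by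
    rcases (Nat.dvd_prime Nat.prime_two).1 h with h1 | h2
    · exact index_eq_one.1 h1 ▸ inferInstance
    · exact normal_of_index_eq_two h2
  have commute_of_mem {g : G} (hg : g ∈ centralizer {x}) : SemiconjBy g x x :=
    mem_centralizer_singleton_iff.1 hg
  let y := a * x * a⁻¹
  have hay : SemiconjBy a x y := SemiconjBy.conj_mk a x
  have hyx : Commute y x :=
    commute_of_mem (hnormal.conj_mem x (mem_centralizer_singleton_iff.2 rfl) a)
  have hconj (g : G) :
      SemiconjBy g x x ∧ SemiconjBy g y y ∨ SemiconjBy g x y ∧ SemiconjBy g y x := by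
    by_cases hg : g ∈ centralizer {x}
    · refine Or.inl ⟨commute_of_mem hg, ?_⟩
      simpa only [mul_assoc, mul_inv_cancel_left, mul_inv_cancel, mul_one] using
        hay.mul_left ((commute_of_mem (hnormal.conj_mem' g hg a)).mul_left hay.inv_symm_left)
    · have hga : g * a ∈ centralizer {x} := (ha g).resolve_right hg
      have hag : a⁻¹ * g ∈ centralizer {x} := (ha _).resolve_left fun hmem => hg <| by
        simpa only [mul_assoc, mul_inv_cancel_left, mul_inv_cancel, mul_one] using
          hnormal.conj_mem _ hmem a
      refine Or.inr ⟨?_, ?_⟩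
      · simpa only [mul_inv_cancel_left] using hay.mul_left (commute_of_mem hag)
      · simpa only [mul_inv_cancel_right] using (commute_of_mem hga).mul_left hay.inv_symm_left
  by_cases h1 : y * x = 1
  · have hy : y ∈ zpowers x := mul_eq_one_iff_eq_inv.1 h1 ▸ inv_mem (mem_zpowers x)
    refine of_semiconjBy_mem_zpowers hx fun g => ?_
    exact (hconj g).elim (fun h => ⟨x, mem_zpowers x, h.1⟩) fun h => ⟨y, hy, h.1⟩
  · refine of_semiconjBy_mem_zpowers h1 fun g => ⟨y * x, mem_zpowers _, ?_⟩
    rcases hconj g with ⟨hgx, hgy⟩ | ⟨hgx, hgy⟩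
    · exact hgy.mul_right hgx
    · simpa only [hyx.eq] using hgy.mul_right hgx

lemma of_card_le_two_mul_card_centralizer [Finite G] {x : G} (hx : x ≠ 1)
    (h : Nat.card G ≤ 2 * Nat.card (centralizer {x})) : HasNormalCyclic G := by
  refine of_index_centralizer_dvd_two hx ?_
  rw [← (centralizer {x}).card_mul_index, mul_comm 2] at h
  have hle : (centralizer {x}).index ≤ 2 := Nat.le_of_mul_le_mul_left h Nat.card_pos
  have hpos : (centralizer {x}).index ≠ 0 := index_ne_zero_of_finite
  interval_cases (centralizer {x}).index <;> simp_all

lemma of_card_eq_mul_prime_pow [Finite G] {a p n : ℕ} (ha : a ≤ 2) (hp : p.Prime) (hn : n ≠ 0)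
    (h : Nat.card G = a * p ^ n) : HasNormalCyclic G := by
  have : Fact p.Prime := ⟨hp⟩
  obtain ⟨P, hP⟩ := Sylow.exists_subgroup_card_pow_prime p (Dvd.intro_left a h.symm)
  have hPnontrivial : Nontrivial P :=
    Finite.one_lt_card_iff_nontrivial.1 (hP ▸ Nat.one_lt_pow hn hp.one_lt)
  have := (IsPGroup.of_card hP).center_nontrivial
  obtain ⟨⟨z, hz⟩, hz1⟩ := exists_ne (1 : center P)
  have hPz : P ≤ centralizer {(z : G)} := fun g hg => mem_centralizer_singleton_iff.2
    (congrArg Subtype.val (mem_center_iff.1 hz ⟨g, hg⟩))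
  refine of_card_le_two_mul_card_centralizer (x := (z : G))
    (fun hz => hz1 (Subtype.ext (Subtype.ext hz))) ?_
  rw [h, ← hP]
  exact Nat.mul_le_mul ha (card_le_of_le hPz)

open scoped IsMulCommutative in
lemma of_normal_of_squarefree {K : Subgroup G} [K.Normal] (hK : K ≠ ⊥)
    (h : Squarefree (Nat.card K)) : HasNormalCyclic G := by
  have : Finite K := Nat.finite_of_card_ne_zero h.ne_zero
  have := IsZGroup.of_squarefree h
  by_cases hcomm : commutator K = ⊥
  · have := (commutator_eq_bot_iff K).1 hcomm
    exact ⟨K, hK, ‹_›, inferInstance⟩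
  · have := IsZGroup.isCyclic_commutator (G := K)
    refine ⟨⁅K, K⁆, ?_, inferInstance, ?_⟩
    · rwa [← map_subtype_commutator, Ne, map_eq_bot_iff_of_injective _ K.subtype_injective]
    · rw [← map_subtype_commutator]
      exact isCyclic_of_surjective _
        (equivMapOfInjective (commutator K) _ K.subtype_injective).surjective

lemma of_squarefree_card [Nontrivial G] (h : Squarefree (Nat.card G)) : HasNormalCyclic G :=
  of_normal_of_squarefree top_ne_bot (card_top (G := G) ▸ h)

end HasNormalCyclic

end NormalCyclic

section AlternatingGroup

open Function

variable {G : Type*} [Group G]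

lemma HasSectionIsomorphicTo.of_le_range {X : Type*} [Group X] (f : G →* X) {K : Subgroup X}
    (hK : K ≤ f.range) : HasSectionIsomorphicTo G K := by
  refine ⟨K.comap f, f.subgroupComap K, fun ⟨y, hy⟩ => ?_⟩
  obtain ⟨x, rfl⟩ := hK hy
  exact ⟨⟨x, hy⟩, rfl⟩

variable [Finite G]

lemma HasSectionIsomorphicTo.alternatingGroup_four {N : Subgroup G} (hindex : N.index = 4)
    (hcore : N.normalCore = ⊥) (hthree : 3 ∣ Nat.card N) :
    HasSectionIsomorphicTo G (alternatingGroup (Fin 4)) := by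
  let e : Equiv.Perm (G ⧸ N) ≃* Equiv.Perm (Fin 4) :=
    (Finite.equivFinOfCardEq hindex).permCongrHom
  let f : G →* Equiv.Perm (Fin 4) := e.toMonoidHom.comp (MulAction.toPermHom G (G ⧸ N))
  have hf : Injective f := by
    refine e.injective.comp ((MonoidHom.ker_eq_bot_iff _).1 ?_)
    rw [← N.normalCore_eq_ker, hcore]
  have hdvd : 3 * 4 ∣ Nat.card f.range := by
    rw [← Nat.card_congr (f.ofInjective hf).toEquiv, ← N.card_mul_index, hindex]
    exact mul_dvd_mul_right hthree 4
  have hcard : Nat.card f.range * f.range.index = 3 * 4 * 2 := by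
    rw [Subgroup.card_mul_index, Nat.card_perm, Nat.card_fin]
    rfl
  refine of_le_range f (Equiv.Perm.alternatingGroup_le_of_index_le_two ?_)
  exact Nat.le_of_dvd two_pos (Nat.dvd_of_mul_dvd_mul_left (show 0 < 3 * 4 by norm_num)
    (hcard ▸ mul_dvd_mul_right hdvd _))

lemma hasNormalCyclic_or_hasSectionIsomorphicTo_of_index_eq_four {N : Subgroup G}
    (hindex : N.index = 4) (hsquarefree : Squarefree (Nat.card N)) (hthree : 3 ∣ Nat.card N) :
    HasNormalCyclic G ∨ HasSectionIsomorphicTo G (alternatingGroup (Fin 4)) := by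
  by_cases hcore : N.normalCore = ⊥
  · exact Or.inr (.alternatingGroup_four hindex hcore hthree)
  · exact Or.inl (.of_normal_of_squarefree hcore
      (hsquarefree.squarefree_of_dvd (Subgroup.card_dvd_of_le N.normalCore_le)))

end AlternatingGroup

section Orders

open Subgroup
open scoped Nat

lemma mul_factorial_le_pow_self {n : ℕ} (hn : 8 ≤ n) : 256 * n ! ≤ n ^ n := by
  induction n, hn using Nat.le_induction with
  | base => decide
  | succ n _ ih =>
    calc 256 * (n + 1)! = (n + 1) * (256 * n !) := by rw [Nat.factorial_succ]; ring
      _ ≤ (n + 1) * (n + 1) ^ n :=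
        Nat.mul_le_mul_left _ (ih.trans (Nat.pow_le_pow_left n.le_succ n))
      _ = (n + 1) ^ (n + 1) := by ring

lemma eq_and_le_of_lt_factorial_div_pow_pow {p k : ℕ} (hp : p.Prime) (hk : k ≠ 0)
    (h : (1 / 2 : ℚ) ^ 8 < ((p ! : ℚ) / (p : ℚ) ^ p) ^ k) :
    p = 2 ∧ k ≤ 7 ∨ p = 3 ∧ k ≤ 3 ∨ p = 5 ∧ k = 1 ∨ p = 7 ∧ k = 1 := by
  have hpow : (0 : ℚ) < (p : ℚ) ^ p := pow_pos (mod_cast hp.pos) p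
  have hle : (p ! : ℚ) / (p : ℚ) ^ p ≤ 1 := by
    rw [div_le_one hpow]
    exact_mod_cast Nat.factorial_le_pow p
  have le_of_pow_le {m : ℕ} (hm : ((p ! : ℚ) / (p : ℚ) ^ p) ^ (m + 1) ≤ (1 / 2 : ℚ) ^ 8) :
      k ≤ m := by
    by_contra! hmk
    exact (h.trans_le ((pow_le_pow_of_le_one (by positivity) hle hmk).trans hm)).false
  by_cases h8 : 8 ≤ p
  · have hbound : (256 : ℚ) * (p ! : ℚ) ≤ (p : ℚ) ^ p := mod_cast mul_factorial_le_pow_self h8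
    have := le_of_pow_le (m := 0) (by rw [zero_add, pow_one, div_le_iff₀ hpow]; linarith)
    omega
  · interval_cases p
    all_goals try norm_num at hp
    · have := le_of_pow_le (m := 7) (by norm_num [Nat.factorial])
      omega
    · have := le_of_pow_le (m := 3) (by norm_num [Nat.factorial])
      omega
    · have := le_of_pow_le (m := 1) (by norm_num [Nat.factorial])
      omega
    · have := le_of_pow_le (m := 1) (by norm_num [Nat.factorial])
      omega

variable {G : Type*} [Group G]

lemma normalizer_zpowers_of_orderOf_eq_two {t : G} (ht : orderOf t = 2) :
    normalizer (zpowers t : Set G) = centralizer {t} := by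
  refine le_antisymm (fun g hg => ?_) ?_
  · have hmem : g * t * g⁻¹ ∈ zpowers t := (mem_normalizer_iff.1 hg t).1 (mem_zpowers t)
    have ht0 : IsOfFinOrder t := orderOf_pos_iff.1 (ht ▸ two_pos)
    obtain ⟨n, hn, hnt⟩ := Finset.mem_image.1 (ht0.mem_zpowers_iff_mem_range_orderOf.1 hmem)
    rw [ht, Finset.mem_range] at hn
    rw [mem_centralizer_singleton_iff]
    interval_cases n
    · rw [pow_zero, eq_comm, conj_eq_one_iff] at hnt
      rw [hnt, mul_one, one_mul]
    · rw [pow_one] at hnt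
      exact mul_inv_eq_iff_eq_mul.1 hnt.symm
  · calc centralizer {t} = centralizer (zpowers t : Set G) := by
          rw [zpowers_eq_closure, centralizer_closure]
      _ ≤ normalizer (zpowers t : Set G) := centralizer_le_normalizer _

lemma prime_sq_dvd_card_centralizer [Finite G] {p : ℕ} (hp : p.Prime) (h : p ^ 2 ∣ Nat.card G)
    {x : G} (hx : orderOf x = p) : p ^ 2 ∣ Nat.card (centralizer {x}) := by
  have : Fact p.Prime := ⟨hp⟩
  obtain ⟨K, hK, hxK⟩ := Sylow.exists_subgroup_card_pow_prime_le p h (zpowers x) (n := 1)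
    (by rw [Nat.card_zpowers, hx, pow_one]) one_le_two
  have hcomm := IsPGroup.isMulCommutative_of_card_eq_prime_sq hK
  rw [← hK]
  refine card_dvd_of_le (K.le_centralizer.trans ?_)
  exact centralizer_le (Set.singleton_subset_iff.2 (hxK (mem_zpowers x)))

variable [Finite G]

lemma exists_card_eq_prime_mul (htp : (1 / 2 : ℚ) ^ 8 < tp G) (hno : ¬HasNormalCyclic G)
    {p : ℕ} (hp : p.Prime) {x : G} (hx : orderOf x = p) :
    ∃ e k, 0 < k ∧ Nat.card (normalizer (zpowers x : Set G)) = p * e ∧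
      Nat.card G = p * (e + k * p) ∧ e ∣ k * p ∧
      (p = 2 ∧ k ≤ 7 ∨ p = 3 ∧ k ≤ 3 ∨ p = 5 ∧ k = 1 ∨ p = 7 ∧ k = 1) := by
  have hcard : Nat.card (zpowers x) = p := by rw [Nat.card_zpowers, hx]
  obtain ⟨k, hk, hprob⟩ := exists_card_eq_and_transProb_le (hcard.symm ▸ hp)
  rw [hcard] at hk hprob
  obtain ⟨e, he⟩ : p ∣ Nat.card (normalizer (zpowers x : Set G)) :=
    hcard ▸ card_dvd_of_le le_normalizer
  have hG : Nat.card G = p * (e + k * p) := by rw [hk, he]; ring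
  have hk0 : k ≠ 0 := by
    rintro rfl
    rw [zero_mul, add_zero] at hk
    have hx1 : x ≠ 1 := by
      rintro rfl
      exact hp.ne_one (hx.symm.trans orderOf_one)
    exact hno (.of_normal_zpowers hx1 (normalizer_eq_top_iff.1 (eq_top_of_card_eq _ hk.symm)))
  refine ⟨e, k, Nat.pos_of_ne_zero hk0, he, hG, ?_, eq_and_le_of_lt_factorial_div_pow_pow hp hk0 ?_⟩
  · have hdvd := card_subgroup_dvd_card (normalizer (zpowers x : Set G))
    rw [he, hG] at hdvd
    exact (Nat.dvd_add_right dvd_rfl).1 (Nat.dvd_of_mul_dvd_mul_left hp.pos hdvd)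
  · exact htp.trans_le ((tp_le_transProb _).trans hprob)

lemma exists_index_eq_four_or_card_eq_of_three_dvd (htp : (1 / 2 : ℚ) ^ 8 < tp G)
    (hno : ¬HasNormalCyclic G) (h : 3 ∣ Nat.card G) :
    (∃ N : Subgroup G, N.index = 4 ∧ (Nat.card N = 3 ∨ Nat.card N = 6)) ∨
      Nat.card G ∈ ({18, 21, 27, 30, 36, 54} : Finset ℕ) := by
  obtain ⟨x, hx⟩ := exists_prime_orderOf_dvd_card' 3 h
  obtain ⟨e, k, hkpos, hN, hG, he, hk⟩ := exists_card_eq_prime_mul htp hno Nat.prime_three hx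
  have hcases : e = k ∧ (k = 1 ∨ k = 2) ∨
      3 * (e + k * 3) ∈ ({18, 21, 27, 30, 36, 54} : Finset ℕ) := by
    have hk3 : k ≤ 3 := by omega
    have hle : e ≤ k * 3 := Nat.le_of_dvd (by omega) he
    interval_cases k <;> interval_cases e <;> first | omega | decide
  rcases hcases with ⟨rfl, hk12⟩ | hmem
  · refine Or.inl ⟨normalizer (zpowers x : Set G), ?_, by omega⟩
    refine Nat.eq_of_mul_eq_mul_left (Nat.card_pos (α := normalizer (zpowers x : Set G))) ?_
    rw [card_mul_index, hN, hG]
    ring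
  · exact Or.inr (hG ▸ hmem)

lemma exists_card_centralizer_of_two_dvd (htp : (1 / 2 : ℚ) ^ 8 < tp G)
    (hno : ¬HasNormalCyclic G) (h : 2 ∣ Nat.card G) :
    ∃ t : G, orderOf t = 2 ∧ 2 ∣ Nat.card (centralizer {t}) ∧
      ∃ k ≤ 7, Nat.card G = Nat.card (centralizer {t}) + 4 * k := by
  obtain ⟨t, ht⟩ := exists_prime_orderOf_dvd_card' 2 h
  obtain ⟨e, k, -, hN, hG, -, hk⟩ := exists_card_eq_prime_mul htp hno Nat.prime_two ht
  rw [normalizer_zpowers_of_orderOf_eq_two ht] at hN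
  exact ⟨t, ht, ⟨e, hN⟩, k, by omega, by omega⟩

lemma card_ne_fifty_six (htp : (1 / 2 : ℚ) ^ 8 < tp G) (hno : ¬HasNormalCyclic G) :
    Nat.card G ≠ 56 := by
  intro hG
  obtain ⟨t, ht, -, k, hk, hcard⟩ :=
    exists_card_centralizer_of_two_dvd htp hno (hG ▸ by norm_num)
  have ht1 : t ≠ 1 := fun h => by simp [h] at ht
  exact hno (.of_card_le_two_mul_card_centralizer ht1 (by omega))

-- An involution commutes with some `x` of order 3, whose centralizer then has order at least 18.
lemma card_ne_thirty_six (htp : (1 / 2 : ℚ) ^ 8 < tp G) (hno : ¬HasNormalCyclic G) :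
    Nat.card G ≠ 36 := by
  intro hG
  obtain ⟨t, ht, htwo, k, hk, hcard⟩ :=
    exists_card_centralizer_of_two_dvd htp hno (hG ▸ by norm_num)
  have hthree : 3 ∣ Nat.card (centralizer {t}) := by
    have hdvd := card_subgroup_dvd_card (centralizer {t})
    have hk_cases : ∀ k ≤ 7, 36 - 4 * k ∣ 36 → 3 ∣ 36 - 4 * k := by decide
    rw [hG] at hcard hdvd
    have hc : Nat.card (centralizer {t}) = 36 - 4 * k := by omega
    exact hc ▸ hk_cases k hk (hc ▸ hdvd)
  obtain ⟨⟨x, hxt⟩, hx⟩ := exists_prime_orderOf_dvd_card' 3 hthree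
  rw [orderOf_mk] at hx
  have hx1 : x ≠ 1 := fun h => by simp [h] at hx
  have htwo : 2 ∣ Nat.card (centralizer {x}) := by
    rw [← ht]
    exact orderOf_dvd_natCard _ (mem_centralizer_singleton_iff.2
      (mem_centralizer_singleton_iff.1 hxt).symm)
  have hnine : 3 ^ 2 ∣ Nat.card (centralizer {x}) :=
    prime_sq_dvd_card_centralizer Nat.prime_three (hG ▸ by norm_num) hx
  have hpos : 0 < Nat.card (centralizer {x}) := Nat.card_pos
  exact hno (.of_card_le_two_mul_card_centralizer hx1 (by omega))

lemma card_notMem_of_not_hasNormalCyclic (hno : ¬HasNormalCyclic G) :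
    Nat.card G ∉ ({18, 21, 27, 30, 50, 54, 98} : Finset ℕ) := by
  intro hG
  simp only [Finset.mem_insert, Finset.mem_singleton] at hG
  have : Nontrivial G := Finite.one_lt_card_iff_nontrivial.1 (by omega)
  rcases hG with hG | hG | hG | hG | hG | hG | hG
  · exact hno (.of_card_eq_mul_prime_pow (a := 2) (n := 2) le_rfl Nat.prime_three two_ne_zero hG)
  · exact hno (.of_squarefree_card (hG ▸ by decide +kernel))
  · exact hno (.of_card_eq_mul_prime_pow (a := 1) (n := 3) one_le_two Nat.prime_three
      three_ne_zero hG)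
  · exact hno (.of_squarefree_card (hG ▸ by decide +kernel))
  · exact hno (.of_card_eq_mul_prime_pow (a := 2) (n := 2) le_rfl Nat.prime_five two_ne_zero hG)
  · exact hno (.of_card_eq_mul_prime_pow (a := 2) (n := 3) le_rfl Nat.prime_three three_ne_zero hG)
  · exact hno (.of_card_eq_mul_prime_pow (a := 2) (n := 2) le_rfl Nat.prime_seven two_ne_zero hG)

lemma eq_two_or_eq_three_of_prime_dvd_card (htp : (1 / 2 : ℚ) ^ 8 < tp G)
    (hno : ¬HasNormalCyclic G) {p : ℕ} (hp : p.Prime) (hdvd : p ∣ Nat.card G) :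
    p = 2 ∨ p = 3 := by
  have : Fact p.Prime := ⟨hp⟩
  obtain ⟨x, hx⟩ := exists_prime_orderOf_dvd_card' p hdvd
  have hcard := card_notMem_of_not_hasNormalCyclic hno
  simp only [Finset.mem_insert, Finset.mem_singleton] at hcard
  obtain ⟨e, k, -, -, hG, he, ⟨rfl, -⟩ | ⟨rfl, -⟩ | ⟨rfl, rfl⟩ | ⟨rfl, rfl⟩⟩ :=
    exists_card_eq_prime_mul htp hno hp hx
  · exact Or.inl rfl
  · exact Or.inr rfl
  · rcases (Nat.dvd_prime hp).1 (one_mul 5 ▸ he) with rfl | rfl <;> omega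
  · have := card_ne_fifty_six htp hno
    rcases (Nat.dvd_prime hp).1 (one_mul 7 ▸ he) with rfl | rfl <;> omega

lemma hasNormalCyclic_or_hasSectionIsomorphicTo [Nontrivial G]
    (htp : (1 / 2 : ℚ) ^ 8 < tp G) :
    HasNormalCyclic G ∨ HasSectionIsomorphicTo G (alternatingGroup (Fin 4)) := by
  by_cases hno : HasNormalCyclic G
  · exact Or.inl hno
  by_cases hthree : 3 ∣ Nat.card G
  · rcases exists_index_eq_four_or_card_eq_of_three_dvd htp hno hthree with ⟨N, hindex, hN⟩ | hG
    · refine hasNormalCyclic_or_hasSectionIsomorphicTo_of_index_eq_four hindex ?_ (by omega)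
      rcases hN with hN | hN <;> exact hN ▸ by decide +kernel
    · have hcard := card_notMem_of_not_hasNormalCyclic hno
      have := card_ne_thirty_six htp hno
      simp only [Finset.mem_insert, Finset.mem_singleton] at hG hcard
      omega
  · have hpow := Nat.eq_prime_pow_of_unique_prime_dvd Nat.card_pos.ne' fun {p} hp hdvd =>
      (eq_two_or_eq_three_of_prime_dvd_card htp hno hp hdvd).resolve_right
        fun h3 => hthree (h3 ▸ hdvd)
    have hlength : (Nat.card G).primeFactorsList.length ≠ 0 := fun h0 =>
      Finite.one_lt_card.ne' (hpow.trans (by rw [h0, pow_zero]))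
    exact Or.inl (.of_card_eq_mul_prime_pow one_le_two Nat.prime_two hlength
      (hpow.trans (one_mul _).symm))

end Orders

theorem stmt14 (G : Type*) [Group G] [Finite G] (h : tp G > (1 / 2 : ℚ) ^ 8) :
    IsSupersoluble G ∨ HasSectionIsomorphicTo G (alternatingGroup (Fin 4)) := by
  induction hn : Nat.card G using Nat.strong_induction_on generalizing G with
  | _ n ih =>
    rcases subsingleton_or_nontrivial G with _ | _
    · exact Or.inl .of_subsingleton
    rcases hasNormalCyclic_or_hasSectionIsomorphicTo h with ⟨C, hC, hnormal, hcyclic⟩ | hsection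
    · have hcard : Nat.card (G ⧸ C) < n := by
        have := C.one_lt_card_iff_ne_bot.2 hC
        rw [← hn, ← C.card_mul_index, ← Subgroup.index]
        exact lt_mul_of_one_lt_left Nat.card_pos this
      have hsurj := QuotientGroup.mk'_surjective C
      have : IsCyclic (QuotientGroup.mk' C).ker := (QuotientGroup.ker_mk' C).symm ▸ hcyclic
      exact (ih _ hcard (G ⧸ C) (h.trans_le (tp_le_of_surjective hsurj)) rfl).imp
        (.of_surjective hsurj) (.of_surjective hsurj)
    · exact Or.inr hsection
end

section
/- Suppose ∏_{i=1}^n t_i!/t_i^{t_i} = ∏_{i=1}^k p_i!/p_i^{p_i}, where t_1, …, t_n are integers greater than 1 and p_1, …, p_k are pairwise distinct primes. Then k = n and, after a suitable rearrangement, t_i = p_i for all i = 1, …, n; equivalently, the multiset {t_1, …, t_n} equals the multiset {p_1, …, p_k}. -/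
/-!
Write `f t = t! / t ^ t`. After cancelling common factors, suppose that disjoint multisets `M`
(the `t i`) and `S` (the `p i`), not both empty, have the same product of values of `f`. Let `r` be
the largest prime that is at most the largest element of `M + S`. By Bertrand's postulate all
elements are `< 2 r`, and for `t < 2 r` the `r`-adic valuation of `f t` is `0`, `1 - r` or `1`
according as `t < r`, `t = r` or `t > r`. Comparing valuations at `r`, and using that no element of
`S` exceeds `r`, shows that `r ∉ S` and that the number of elements of `M` which are `≥ r` is a
positive multiple of `r`. As `f` decreases, the product over `M` is at most `f r ^ r`. The elements
of `S` are `≤ r - 1` and, being distinct, they number at most `r`, so the product over `S` is at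
least `f (r - 1) ^ r`, which is larger.
-/

open Finset

section MultisetProducts

variable {α R : Type*} {f : α → R} {M : Multiset α}

section Ordered

variable [CommSemiring R] [PartialOrder R] [IsOrderedRing R]

lemma prod_map_le_pow_countP_of_antitone [Preorder α] [DecidableLE α] (hf : Antitone f)
    (hf0 : ∀ a, 0 ≤ f a) (hf1 : ∀ a, f a ≤ 1) (b : α) (M : Multiset α) :
    (M.map f).prod ≤ f b ^ M.countP (b ≤ ·) := by
  induction M using Multiset.induction with
  | empty => simp
  | cons a M ih =>
    have hpos : 0 ≤ (M.map f).prod := Multiset.prod_map_nonneg fun a _ => hf0 a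
    rw [Multiset.map_cons, Multiset.prod_cons]
    by_cases h : b ≤ a
    · rw [Multiset.countP_cons_of_pos _ h, pow_succ']
      exact mul_le_mul (hf h) ih hpos (hf0 b)
    · rw [Multiset.countP_cons_of_neg _ h]
      exact (mul_le_of_le_one_left hpos (hf1 a)).trans ih

lemma pow_card_le_prod_map {x : R} (hx : 0 ≤ x) (hf : ∀ a ∈ M, x ≤ f a) :
    x ^ M.card ≤ (M.map f).prod := by
  rw [← Multiset.prod_replicate, ← Multiset.map_const']
  exact Multiset.prod_map_le_prod_map₀ _ _ (fun _ _ => hx) hf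

end Ordered

variable [DecidableEq α]

lemma disjoint_tsub_tsub (M N : Multiset α) : Disjoint (M - N) (N - M) := by
  rw [Multiset.disjoint_left]
  intro a hM hN
  rw [Multiset.mem_sub] at hM hN
  exact hM.asymm hN

lemma prod_map_tsub_eq_of_prod_map_eq [CommGroupWithZero R] {N : Multiset α}
    (hf : ∀ a ∈ M, f a ≠ 0) (h : (M.map f).prod = (N.map f).prod) :
    ((M - N).map f).prod = ((N - M).map f).prod := by
  have hfactor (A B : Multiset α) :
      (A.map f).prod = ((A - B).map f).prod * ((A ∩ B).map f).prod := by
    rw [← Multiset.prod_add, ← Multiset.map_add, Multiset.sub_add_inter]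
  have hinter : ((M ∩ N).map f).prod ≠ 0 := Multiset.prod_ne_zero fun h0 => by
    obtain ⟨a, ha, ha0⟩ := Multiset.mem_map.1 h0
    exact hf a (Multiset.mem_inter.1 ha).1 ha0
  rw [hfactor M N, hfactor N M, Multiset.inter_comm N M] at h
  exact mul_right_cancel₀ hinter h

end MultisetProducts

/-- The ratio `n! / n ^ n`, whose products the theorem compares; it is `1` at both `0` and `1`,
as `0 ^ 0 = 1`. -/
def factorialRatio (n : ℕ) : ℚ := (n.factorial : ℚ) / (n : ℚ) ^ n

lemma factorialRatio_pos (n : ℕ) : 0 < factorialRatio n :=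
  div_pos (mod_cast n.factorial_pos) (mod_cast Nat.pow_self_pos)

lemma factorialRatio_succ (n : ℕ) :
    factorialRatio (n + 1) = (n.factorial : ℚ) / ((n : ℚ) + 1) ^ n := by
  rw [factorialRatio, Nat.factorial_succ, pow_succ]
  push_cast
  field_simp

lemma factorialRatio_succ_lt {n : ℕ} (hn : n ≠ 0) :
    factorialRatio (n + 1) < factorialRatio n := by
  rw [factorialRatio_succ, factorialRatio]
  gcongr
  exact lt_add_of_pos_right _ one_pos

lemma factorialRatio_antitone : Antitone factorialRatio := by
  refine antitone_nat_of_succ_le fun n => ?_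
  rcases eq_or_ne n 0 with rfl | hn
  · simp [factorialRatio]
  · exact (factorialRatio_succ_lt hn).le

lemma factorialRatio_le_one (n : ℕ) : factorialRatio n ≤ 1 := by
  simpa [factorialRatio] using factorialRatio_antitone n.zero_le

lemma prod_map_factorialRatio_pos (M : Multiset ℕ) : 0 < (M.map factorialRatio).prod := by
  refine Multiset.prod_pos fun x hx => ?_
  obtain ⟨n, -, rfl⟩ := Multiset.mem_map.1 hx
  exact factorialRatio_pos n

lemma prod_map_factorialRatio_lt {r : ℕ} (hr : 1 < r) {M S : Multiset ℕ}
    (hM : r ≤ M.countP (r ≤ ·)) (hS : ∀ q ∈ S, q < r) (hcard : S.card ≤ r) :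
    (M.map factorialRatio).prod < (S.map factorialRatio).prod := by
  obtain ⟨s, rfl⟩ : ∃ s, r = s + 1 := Nat.exists_eq_add_one.2 (by lia)
  calc (M.map factorialRatio).prod
    _ ≤ factorialRatio (s + 1) ^ M.countP (s + 1 ≤ ·) :=
        prod_map_le_pow_countP_of_antitone factorialRatio_antitone
          (fun n => (factorialRatio_pos n).le) factorialRatio_le_one _ M
    _ ≤ factorialRatio (s + 1) ^ (s + 1) :=
        pow_le_pow_of_le_one (factorialRatio_pos _).le (factorialRatio_le_one _) hM
    _ < factorialRatio s ^ (s + 1) :=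
        pow_lt_pow_left₀ (factorialRatio_succ_lt (by lia)) (factorialRatio_pos _).le (by lia)
    _ ≤ factorialRatio s ^ S.card :=
        pow_le_pow_of_le_one (factorialRatio_pos _).le (factorialRatio_le_one _) hcard
    _ ≤ (S.map factorialRatio).prod :=
        pow_card_le_prod_map (factorialRatio_pos s).le fun q hq =>
          factorialRatio_antitone (Nat.le_of_lt_succ (hS q hq))

section Valuation

variable {r : ℕ} [hr : Fact r.Prime]

lemma padicValRat_factorialRatio (t : ℕ) :
    padicValRat r (factorialRatio t) = padicValNat r t.factorial - t * padicValNat r t := by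
  have hfac : (t.factorial : ℚ) ≠ 0 := mod_cast t.factorial_ne_zero
  have hpow : (t : ℚ) ^ t ≠ 0 := mod_cast Nat.pow_self_pos.ne'
  rw [factorialRatio, padicValRat.div hfac hpow, padicValRat.pow, padicValRat.of_nat,
    padicValRat.of_nat]

lemma padicValNat_factorial_of_lt_sq {t : ℕ} (ht : t < r ^ 2) :
    padicValNat r t.factorial = t / r := by
  rw [padicValNat_factorial (Nat.log_lt_of_lt_pow' two_ne_zero ht)]
  simp

lemma padicValNat_of_lt_two_mul {t : ℕ} (ht : t < 2 * r) :
    padicValNat r t = if t = r then 1 else 0 := by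
  split_ifs with h
  · rw [h, padicValNat_self]
  · rw [padicValNat.eq_zero_iff]
    refine .inr <| or_iff_not_imp_left.2 fun h0 => ?_
    rintro ⟨c, rfl⟩
    have : c < 2 := by nlinarith
    interval_cases c <;> simp_all

lemma padicValRat_factorialRatio_of_lt_two_mul {t : ℕ} (ht : t < 2 * r) :
    padicValRat r (factorialRatio t) =
      (if r ≤ t then 1 else 0) - (r : ℤ) * (if t = r then 1 else 0) := by
  have hr2 := hr.out.two_le
  have hdiv : t / r = if r ≤ t then 1 else 0 := by
    split_ifs with h
    · exact Nat.div_eq_of_lt_le (by lia) (by lia)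
    · exact Nat.div_eq_of_lt (not_le.1 h)
  rw [padicValRat_factorialRatio, padicValNat_factorial_of_lt_sq (by nlinarith), hdiv,
    padicValNat_of_lt_two_mul ht]
  by_cases h : t = r <;> simp [h]

lemma padicValRat_prod_map_factorialRatio {M : Multiset ℕ} (hM : ∀ t ∈ M, t < 2 * r) :
    padicValRat r (M.map factorialRatio).prod =
      (M.countP (r ≤ ·) : ℤ) - r * (M.count r : ℤ) := by
  induction M using Multiset.induction with
  | empty => simp
  | cons a M ih =>
    rw [Multiset.forall_mem_cons] at hM
    rw [Multiset.map_cons, Multiset.prod_cons, padicValRat.mul (factorialRatio_pos a).ne'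
      (prod_map_factorialRatio_pos M).ne', ih hM.2,
      padicValRat_factorialRatio_of_lt_two_mul hM.1, Multiset.countP_cons, Multiset.count_cons]
    simp only [eq_comm (a := r)]
    push_cast
    ring

end Valuation

lemma exists_isGreatest_prime_le {n : ℕ} (hn : 2 ≤ n) :
    ∃ r, IsGreatest {q | q.Prime ∧ q ≤ n} r :=
  ⟨Nat.findGreatest Nat.Prime n,
    ⟨Nat.findGreatest_spec hn Nat.prime_two, Nat.findGreatest_le n⟩,
    fun _ hq => Nat.le_findGreatest hq.2 hq.1⟩

lemma lt_two_mul_of_isGreatest_prime_le {n r : ℕ} (hr : IsGreatest {q | q.Prime ∧ q ≤ n} r) :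
    n < 2 * r := by
  obtain ⟨q, hq, hrq, hqr⟩ := Nat.exists_prime_lt_and_le_two_mul r hr.1.1.ne_zero
  by_contra! h
  exact hrq.not_ge (hr.2 ⟨hq, hqr.trans h⟩)

section Uniqueness

variable {M S : Multiset ℕ}

lemma countP_add_mul_count_of_prod_eq {r : ℕ} (hr : r.Prime) (hM : ∀ t ∈ M, t < 2 * r)
    (hS : ∀ q ∈ S, q < 2 * r) (h : (M.map factorialRatio).prod = (S.map factorialRatio).prod) :
    M.countP (r ≤ ·) + r * S.count r = S.countP (r ≤ ·) + r * M.count r := by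
  have := Fact.mk hr
  have hval := congrArg (padicValRat r) h
  rw [padicValRat_prod_map_factorialRatio hM, padicValRat_prod_map_factorialRatio hS] at hval
  exact_mod_cast sub_eq_sub_iff_add_eq_add.1 hval

lemma le_countP_of_prod_eq {r : ℕ} (hr : r.Prime) (hM : ∀ t ∈ M, t < 2 * r)
    (hS : ∀ q ∈ S, q ≤ r) (hdisj : Disjoint M S) (hmem : ∃ t ∈ M + S, r ≤ t)
    (h : (M.map factorialRatio).prod = (S.map factorialRatio).prod) :
    r ≤ M.countP (r ≤ ·) ∧ r ∉ S := by
  have hr2 := hr.two_le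
  have hcountS : S.countP (r ≤ ·) = S.count r :=
    Multiset.countP_congr rfl fun q hq => by
      simpa using ⟨fun hle => hle.antisymm (hS q hq), fun he => he.le⟩
  have hval : M.countP (r ≤ ·) + r * S.count r = S.count r + r * M.count r := by
    nth_rw 2 [← hcountS]
    exact countP_add_mul_count_of_prod_eq hr hM (fun q hq => by have := hS q hq; lia) h
  have hrM : r ∈ M := by
    by_contra hrM
    have hzero : M.countP (r ≤ ·) = 0 ∧ S.countP (r ≤ ·) = 0 := by
      rw [Multiset.count_eq_zero.2 hrM] at hval
      rw [hcountS]
      constructor <;> nlinarith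
    obtain ⟨t, ht, hrt⟩ := hmem
    have hpos : 0 < (M + S).countP (r ≤ ·) := Multiset.countP_pos.2 ⟨t, ht, hrt⟩
    rw [Multiset.countP_add, hzero.1, hzero.2] at hpos
    exact hpos.false
  have hrS : r ∉ S := Multiset.disjoint_left.1 hdisj hrM
  have hmul : M.countP (r ≤ ·) = r * M.count r := by
    simpa [Multiset.count_eq_zero.2 hrS] using hval
  exact ⟨hmul ▸ Nat.le_mul_of_pos_right r (Multiset.count_pos.2 hrM), hrS⟩

lemma add_eq_zero_of_disjoint_of_prod_eq (hM : ∀ t ∈ M, 1 < t) (hS : ∀ q ∈ S, q.Prime)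
    (hcount : ∀ q, q.Prime → S.countP (· < q) ≤ q) (hdisj : Disjoint M S)
    (h : (M.map factorialRatio).prod = (S.map factorialRatio).prod) : M + S = 0 := by
  by_contra hne
  obtain ⟨a, ha⟩ := Multiset.exists_mem_of_ne_zero hne
  have hMS : ∀ t ∈ M + S, 1 < t := fun t ht =>
    (Multiset.mem_add.1 ht).elim (hM t) fun hq => (hS t hq).one_lt
  obtain ⟨r, hgr⟩ := exists_isGreatest_prime_le ((hMS a ha).trans_le (Multiset.le_sup ha))
  have hr := hgr.1.1
  have hleM : ∀ t ∈ M, t < 2 * r := fun t ht =>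
    (Multiset.le_sup (Multiset.mem_add.2 (.inl ht))).trans_lt
      (lt_two_mul_of_isGreatest_prime_le hgr)
  have hleS : ∀ q ∈ S, q ≤ r := fun q hq =>
    hgr.2 ⟨hS q hq, Multiset.le_sup (Multiset.mem_add.2 (.inr hq))⟩
  have hmem : ∃ t ∈ M + S, r ≤ t := by
    by_contra! hlt
    have hsup : (M + S).sup ≤ r - 1 :=
      Multiset.sup_le.2 fun t ht => Nat.le_sub_one_of_lt (hlt t ht)
    have := hgr.1.2
    have := hr.pos
    lia
  obtain ⟨hcountM, hrS⟩ := le_countP_of_prod_eq hr hleM hleS hdisj hmem h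
  have hltS : ∀ q ∈ S, q < r := fun q hq => (hleS q hq).lt_of_ne (ne_of_mem_of_not_mem hq hrS)
  have hcard : S.card ≤ r := (Multiset.countP_eq_card.2 hltS).ge.trans (hcount r hr)
  exact (prod_map_factorialRatio_lt hr.one_lt hcountM hltS hcard).ne h

theorem eq_of_prod_map_factorialRatio_eq (hM : ∀ t ∈ M, 1 < t) (hS : ∀ q ∈ S, q.Prime)
    (hcount : ∀ q, q.Prime → S.countP (· < q) ≤ q)
    (h : (M.map factorialRatio).prod = (S.map factorialRatio).prod) : M = S := by
  have hzero : (M - S) + (S - M) = 0 :=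
    add_eq_zero_of_disjoint_of_prod_eq
      (fun t ht => hM t (Multiset.mem_of_le tsub_le_self ht))
      (fun q hq => hS q (Multiset.mem_of_le tsub_le_self hq))
      (fun q hq => (Multiset.countP_le_of_le _ tsub_le_self).trans (hcount q hq))
      (disjoint_tsub_tsub M S)
      (prod_map_tsub_eq_of_prod_map_eq (fun t _ => (factorialRatio_pos t).ne') h)
  obtain ⟨hMS, hSM⟩ := add_eq_zero.1 hzero
  exact (tsub_eq_zero_iff_le.1 hMS).antisymm (tsub_eq_zero_iff_le.1 hSM)

end Uniqueness

lemma exists_equiv_of_map_univ_eq {ι κ α : Type*} [Fintype ι] [Fintype κ] {f : ι → α} {g : κ → α}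
    (h : (univ : Finset ι).val.map f = (univ : Finset κ).val.map g) :
    ∃ e : ι ≃ κ, ∀ i, f i = g (e i) := by
  classical
  have hfiber (a : α) : Fintype.card {i // f i = a} = Fintype.card {j // g j = a} := by
    simpa [Multiset.count_map, Fintype.card_subtype, Finset.card_def, eq_comm] using
      congrArg (Multiset.count a) h
  let e : ι ≃ κ := Equiv.ofFiberEquiv fun a => Fintype.equivOfCardEq (hfiber a)
  exact ⟨e, fun i => (Equiv.ofFiberEquiv_map _ i).symm⟩

lemma card_filter_lt_le_of_injective {κ : Type*} [Fintype κ] {p : κ → ℕ}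
    (hp : Function.Injective p) (m : ℕ) : #{j | p j < m} ≤ m := by
  simpa using Finset.card_le_card_of_injOn (t := range m) p (fun j hj => by simpa using hj) hp.injOn

theorem stmt16_general {ι κ : Type*} [Fintype ι] [Fintype κ] (t : ι → ℕ) (ht : ∀ i, 1 < t i)
    (p : κ → ℕ) (hp : ∀ j, (p j).Prime) (hcount : ∀ q, q.Prime → #{j | p j < q} ≤ q)
    (heq : ∏ i, ((t i).factorial : ℚ) / (t i : ℚ) ^ t i
         = ∏ j, ((p j).factorial : ℚ) / (p j : ℚ) ^ p j) :
    ∃ e : ι ≃ κ, ∀ i, t i = p (e i) := by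
  refine exists_equiv_of_map_univ_eq (eq_of_prod_map_factorialRatio_eq ?_ ?_ ?_ ?_)
  · simpa using ht
  · simpa using hp
  · intro q hq
    simpa [Multiset.countP_map, Finset.card_def] using hcount q hq
  · rw [Multiset.map_map, Multiset.map_map]
    exact heq

theorem stmt16 (n k : ℕ) (t : Fin n → ℕ) (ht : ∀ i, 1 < t i)
    (p : Fin k → ℕ) (hp : ∀ i, (p i).Prime) (hinj : Function.Injective p)
    (heq : ∏ i, ((t i).factorial : ℚ) / (t i : ℚ) ^ t i
         = ∏ i, ((p i).factorial : ℚ) / (p i : ℚ) ^ p i) :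
    n = k ∧ ∃ e : Fin n ≃ Fin k, ∀ i, t i = p (e i) := by
  obtain ⟨e, he⟩ := stmt16_general t ht p hp (fun q _ => card_filter_lt_le_of_injective hinj q) heq
  exact ⟨Fin.equiv_iff_eq.1 ⟨e⟩, e, he⟩
end
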